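/- arXiv:2206.05410 — 5 statements merged into one kernel-verified Lean document; each statement's English description precedes it below -/
import Mathlib

section
/- Fix an agent i, an action w, a different agent k ≠ i and an action l. The function Q ↦ R_i(w; Q) is differentiable in the coordinate Q k l, and |∂ R_i(w; Q) / ∂ (Q k l)| ≤ (1/λ) · ∑_{C : Fin N → Fin K with C i = w} (∏_{j ≠ i} L(Q j, C j)) · |E_i(C)|. -/
/-!
Each Boltzmann probability satisfies the softmax derivative formula
`∂ L(q, c) / ∂ q l = L(q, c) * (δ_{c l} - L(q, l)) / λ`. Since `k ≠ i`, exactly one factor of the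
product `∏_{j ≠ i} L(Q j, C j)` depends on `Q k`, so differentiating multiplies each summand of
`R_i(w; Q)` by `(δ_{(C k) l} - L(Q k, l)) / λ`. As `0 ≤ L ≤ 1`, this multiplier has absolute value
at most `1 / λ`, and the triangle inequality gives the bound.
-/

open Finset

/-- The softmax derivative formula `∂ L(q, c) / ∂ q l = L(q, c) * (δ_{c l} - L(q, l)) / λ`. -/
lemma hasDerivAt_boltzmann {K : ℕ} (lam : ℝ) (L : (Fin K → ℝ) → Fin K → ℝ)
    (hL : ∀ q c, L q c = Real.exp (q c / lam) / ∑ c', Real.exp (q c' / lam))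
    (q : Fin K → ℝ) (l c : Fin K) :
    HasDerivAt (fun x : ℝ => L (Function.update q l x) c)
      (L q c * (((if c = l then 1 else 0) - L q l) / lam)) (q l) := by
  have hexp : ∀ a : Fin K, HasDerivAt (fun x : ℝ => Real.exp (Function.update q l x a / lam))
      (if a = l then Real.exp (q l / lam) / lam else 0) (q l) := by
    intro a
    by_cases h : a = l
    · subst h
      simpa [div_eq_mul_inv] using ((hasDerivAt_id (q a)).div_const lam).exp
    · simpa [h] using hasDerivAt_const (q l) (Real.exp (q a / lam))
  have hsum : HasDerivAt (fun x : ℝ => ∑ a, Real.exp (Function.update q l x a / lam))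
      (Real.exp (q l / lam) / lam) (q l) := by
    have h := HasDerivAt.fun_sum (u := Finset.univ) (fun a _ => hexp a)
    simpa using h
  have hpos : 0 < ∑ a, Real.exp (q a / lam) :=
    Finset.sum_pos (fun a _ => Real.exp_pos _) ⟨l, Finset.mem_univ l⟩
  have hdiv := (hexp c).fun_div hsum (by simpa using hpos.ne')
  simp only [hL]
  refine hdiv.congr_deriv ?_
  simp only [Function.update_eq_self]
  by_cases h : c = l
  · subst h
    simp only [if_true]
    field_simp
  · simp only [h, if_false]
    field_simp
    ring

lemma boltzmann_nonneg {K : ℕ} (lam : ℝ) (L : (Fin K → ℝ) → Fin K → ℝ)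
    (hL : ∀ q c, L q c = Real.exp (q c / lam) / ∑ c', Real.exp (q c' / lam))
    (q : Fin K → ℝ) (c : Fin K) : 0 ≤ L q c := by
  rw [hL]
  positivity

lemma boltzmann_le_one {K : ℕ} (lam : ℝ) (L : (Fin K → ℝ) → Fin K → ℝ)
    (hL : ∀ q c, L q c = Real.exp (q c / lam) / ∑ c', Real.exp (q c' / lam))
    (q : Fin K → ℝ) (c : Fin K) : L q c ≤ 1 := by
  rw [hL]
  exact div_le_one_of_le₀
    (Finset.single_le_sum (f := fun a => Real.exp (q a / lam))
      (fun a _ => (Real.exp_pos _).le) (Finset.mem_univ c))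
    (by positivity)

/-- With `N` agents, action sets `Fin K`, Boltzmann probabilities `L`, payoffs
`E i`, and `R i w Q = ∑_{C : C i = w} (∏_{j ≠ i} L (Q j) (C j)) · E i C`, the map
`Q k l ↦ R i w Q` is differentiable for `k ≠ i`, and its partial derivative `D` satisfies
`|D| ≤ (1/λ) ∑_{C : C i = w} (∏_{j ≠ i} L (Q j) (C j)) · |E i C|`. -/
theorem stmt_2 (N K : ℕ) (hN : 1 ≤ N) (hK : 1 ≤ K) (lam : ℝ) (hlam : 0 < lam)
    (E : Fin N → (Fin N → Fin K) → ℝ)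
    (L : (Fin K → ℝ) → Fin K → ℝ)
    (hL : ∀ q c, L q c = Real.exp (q c / lam) / ∑ c', Real.exp (q c' / lam))
    (R : Fin N → Fin K → (Fin N → Fin K → ℝ) → ℝ)
    (hR : ∀ i w Q, R i w Q =
      ∑ C ∈ Finset.univ.filter (fun C : Fin N → Fin K => C i = w),
        (∏ j ∈ Finset.univ.filter (fun j => j ≠ i), L (Q j) (C j)) * E i C)
    (i : Fin N) (w : Fin K) (k : Fin N) (hk : k ≠ i) (l : Fin K)
    (Q : Fin N → Fin K → ℝ) :
    ∃ D : ℝ,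
      HasDerivAt
        (fun x : ℝ => R i w (Function.update Q k (Function.update (Q k) l x))) D (Q k l) ∧
      |D| ≤ (1 / lam) *
        ∑ C ∈ Finset.univ.filter (fun C : Fin N → Fin K => C i = w),
          (∏ j ∈ Finset.univ.filter (fun j => j ≠ i), L (Q j) (C j)) * |E i C| := by
  have hmem : k ∈ Finset.univ.filter (fun j => j ≠ i) := by simp [hk]
  have hterm : ∀ C : Fin N → Fin K, HasDerivAt
      (fun x : ℝ => (∏ j ∈ Finset.univ.filter (fun j => j ≠ i),
        L (Function.update Q k (Function.update (Q k) l x) j) (C j)) * E i C)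
      ((∏ j ∈ Finset.univ.filter (fun j => j ≠ i), L (Q j) (C j)) *
        (((if C k = l then 1 else 0) - L (Q k) l) / lam) * E i C) (Q k l) := by
    intro C
    have h := ((hasDerivAt_boltzmann lam L hL (Q k) l (C k)).mul_const
      (∏ j ∈ (Finset.univ.filter (fun j => j ≠ i)).erase k, L (Q j) (C j))).mul_const (E i C)
    have hfun : (fun x : ℝ => (∏ j ∈ Finset.univ.filter (fun j => j ≠ i),
        L (Function.update Q k (Function.update (Q k) l x) j) (C j)) * E i C) =
        fun x : ℝ => L (Function.update (Q k) l x) (C k) *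
          (∏ j ∈ (Finset.univ.filter (fun j => j ≠ i)).erase k, L (Q j) (C j)) * E i C := by
      funext x
      rw [← Finset.mul_prod_erase _ _ hmem, Function.update_self]
      congr 2
      refine Finset.prod_congr rfl fun j hj => ?_
      rw [Function.update_of_ne (Finset.ne_of_mem_erase hj)]
    rw [hfun]
    refine h.congr_deriv ?_
    rw [← Finset.mul_prod_erase _ _ hmem]
    ring
  refine ⟨∑ C ∈ Finset.univ.filter (fun C : Fin N → Fin K => C i = w),
    (∏ j ∈ Finset.univ.filter (fun j => j ≠ i), L (Q j) (C j)) *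
      (((if C k = l then 1 else 0) - L (Q k) l) / lam) * E i C, ?_, ?_⟩
  · simp only [hR]
    exact HasDerivAt.fun_sum fun C _ => hterm C
  · rw [Finset.mul_sum]
    refine (Finset.abs_sum_le_sum_abs _ _).trans (Finset.sum_le_sum fun C _ => ?_)
    have hP : 0 ≤ ∏ j ∈ Finset.univ.filter (fun j => j ≠ i), L (Q j) (C j) :=
      Finset.prod_nonneg fun j _ => boltzmann_nonneg lam L hL _ _
    have hδ : |((if C k = l then 1 else 0) - L (Q k) l) / lam| ≤ 1 / lam := by
      rw [abs_div, abs_of_pos hlam]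
      have h0 := boltzmann_nonneg lam L hL (Q k) l
      have h1 := boltzmann_le_one lam L hL (Q k) l
      gcongr
      rw [abs_le]
      split_ifs <;> constructor <;> linarith
    rw [abs_mul, abs_mul, abs_of_nonneg hP, mul_comm (∏ j ∈ _, _), mul_assoc]
    gcongr
end

section
/- Suppose the payoff of agent 1 is separable: there exist bounded functions Ea, Eb : (Fin N → Fin M) → ℝ and a constant r_d ∈ ℝ such that for every combined action profile C : Fin N → Fin M × Fin M, E_1(C) = Ea(fun j => (C j).1) + Eb(fun j => (C j).2) + r_d. Let γ ∈ [0,1) and λ > 0. Suppose q*_a : Fin M → ℝ satisfies q*_a(w_a) = ∑_{A : Fin N → Fin M with A 1 = w_a} (∏_{j ≠ 1} L(q*_a, A j)) · Ea(A) + γ max_{w'} q*_a(w') for all w_a, and q*_b : Fin M → ℝ satisfies the analogous equation with Eb. Define q* : Fin M × Fin M → ℝ by q*(w_a, w_b) = q*_a(w_a) + q*_b(w_b) + r_d/(1−γ). Then q* satisfies the combined fixed-point equation: for all w = (w_a, w_b), q*(w) = ∑_{C : Fin N → Fin M × Fin M with C 1 = w} (∏_{j ≠ 1} L(q*, C j))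 · E_1(C) + γ max_{w'} q*(w'). -/
/-!
Since `q*` is a sum of an ask part, a bid part and a constant, its Boltzmann law on pairs is the
product of the two one-sided laws (`boltz_add`). The law of the opponents' combined actions is
therefore the product of an ask law and a bid law (`sum_profiles`), and each of them has total mass
one (`sum_weight`). Averaging the separable payoff thus returns the ask average plus the bid average
plus `r_d`. The maximum of `q*` splits in the same way (`iSup_separable`), and the constants match
because `r_d + γ r_d / (1 - γ) = r_d / (1 - γ)`.
-/

open Finset

/-- Boltzmann selection probability with temperature `lam` over a finite action set. -/
noncomputable def boltz {A : Type*} [Fintype A] (lam : ℝ) (q : A → ℝ) (c : A) : ℝ :=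
  Real.exp (q c / lam) / ∑ c', Real.exp (q c' / lam)

theorem boltz_sum {A : Type*} [Fintype A] [Nonempty A] (lam : ℝ) (q : A → ℝ) :
    ∑ c, boltz lam q c = 1 := by
  unfold boltz
  rw [← Finset.sum_div]
  exact div_self (Finset.sum_pos (fun _ _ => Real.exp_pos _) Finset.univ_nonempty).ne'

theorem boltz_add {A B : Type*} [Fintype A] [Fintype B] (lam : ℝ) (qa : A → ℝ) (qb : B → ℝ)
    (k : ℝ) (q : A × B → ℝ) (hq : ∀ w, q w = qa w.1 + qb w.2 + k) (w : A × B) :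
    boltz lam q w = boltz lam qa w.1 * boltz lam qb w.2 := by
  have hexp : ∀ w, Real.exp (q w / lam)
      = Real.exp (qa w.1 / lam) * Real.exp (qb w.2 / lam) * Real.exp (k / lam) := by
    intro w
    rw [hq, add_div, add_div, Real.exp_add, Real.exp_add]
  unfold boltz
  simp only [hexp]
  rw [← Finset.sum_mul, Fintype.sum_prod_type]
  dsimp only
  rw [← Fintype.sum_mul_sum, mul_div_mul_right _ _ (Real.exp_pos _).ne', div_mul_div_comm]

/-- With agent `a1`'s action pinned to `w`, the weights of the other agents' action profiles
form a probability distribution. -/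
theorem sum_weight {ι A : Type*} [Fintype ι] [DecidableEq ι] [Fintype A] [DecidableEq A]
    (a1 : ι) (p : A → ℝ) (hp : ∑ a, p a = 1) (w : A) :
    ∑ f ∈ Finset.univ.filter (fun f : ι → A => f a1 = w),
      ∏ j ∈ Finset.univ.filter (fun j => j ≠ a1), p (f j) = 1 := by
  -- Profiles with `f a1 = w` form a box, so the sum of products is a product of sums.
  have hset : Finset.univ.filter (fun f : ι → A => f a1 = w)
      = Fintype.piFinset (fun j => if j = a1 then {w} else Finset.univ) := by
    ext f
    simp only [Finset.mem_filter, Finset.mem_univ, true_and, Fintype.mem_piFinset]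
    constructor
    · intro h j
      by_cases hj : j = a1
      · subst hj; simp [h]
      · simp [hj]
    · intro h
      simpa using h a1
  rw [hset]
  simp only [Finset.prod_filter]
  rw [← Finset.prod_univ_sum (fun j => if j = a1 then {w} else Finset.univ)
    (fun j a => if j ≠ a1 then p a else 1)]
  refine Finset.prod_eq_one fun j _ => ?_
  by_cases hj : j = a1 <;> simp [hj, hp]

/-- A profile of pairs is a pair of profiles. -/
theorem sum_profiles {ι A B : Type*} [Fintype ι] [DecidableEq ι] [Fintype A] [DecidableEq A]
    [Fintype B] [DecidableEq B] (a1 : ι) (w : A × B) (F : (ι → A) → (ι → B) → ℝ) :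
    ∑ C ∈ Finset.univ.filter (fun C : ι → A × B => C a1 = w),
        F (fun j => (C j).1) (fun j => (C j).2)
      = ∑ f ∈ Finset.univ.filter (fun f : ι → A => f a1 = w.1),
          ∑ g ∈ Finset.univ.filter (fun g : ι → B => g a1 = w.2), F f g := by
  rw [← Finset.sum_product']
  refine Finset.sum_equiv (Equiv.arrowProdEquivProdArrow ι (fun _ => A) (fun _ => B)) ?_ ?_
  · intro C
    simp [Equiv.arrowProdEquivProdArrow, Prod.ext_iff]
  · intro C _
    rfl

theorem iSup_separable {A B : Type*} [Finite A] [Finite B] [Nonempty A] [Nonempty B]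
    (qa : A → ℝ) (qb : B → ℝ) (k : ℝ) (q : A × B → ℝ)
    (hq : ∀ w, q w = qa w.1 + qb w.2 + k) :
    ⨆ w, q w = (⨆ a, qa a) + (⨆ b, qb b) + k := by
  apply le_antisymm
  · refine ciSup_le fun w => ?_
    rw [hq]
    gcongr
    · exact le_ciSup (Set.finite_range qa).bddAbove w.1
    · exact le_ciSup (Set.finite_range qb).bddAbove w.2
  · obtain ⟨a, ha⟩ := exists_eq_ciSup_of_finite (f := qa)
    obtain ⟨b, hb⟩ := exists_eq_ciSup_of_finite (f := qb)
    rw [← ha, ← hb, ← hq (a, b)]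
    exact le_ciSup (Set.finite_range q).bddAbove (a, b)

/-- Lemma 2, separability: if agent 1's payoff separates into ask side, bid
side and a constant, and `q*_a`, `q*_b` solve the one-sided fixed-point equations, then
`q*(w_a, w_b) = q*_a(w_a) + q*_b(w_b) + r_d/(1−γ)` solves the combined fixed-point
equation. Here `a1 : Fin N` plays the role of agent 1. -/
theorem stmt_7 (N M : ℕ) (hN : 1 ≤ N) (hM : 1 ≤ M) (a1 : Fin N)
    (lam γ : ℝ) (hlam : 0 < lam) (hγ0 : 0 ≤ γ) (hγ1 : γ < 1)
    (Ea Eb : (Fin N → Fin M) → ℝ) (rd : ℝ)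
    (E1 : (Fin N → Fin M × Fin M) → ℝ)
    (hE1 : ∀ C, E1 C = Ea (fun j => (C j).1) + Eb (fun j => (C j).2) + rd)
    (qa qb : Fin M → ℝ)
    (hqa : ∀ wa, qa wa =
      (∑ A ∈ Finset.univ.filter (fun A : Fin N → Fin M => A a1 = wa),
        (∏ j ∈ Finset.univ.filter (fun j => j ≠ a1), boltz lam qa (A j)) * Ea A)
      + γ * ⨆ w', qa w')
    (hqb : ∀ wb, qb wb =
      (∑ B ∈ Finset.univ.filter (fun B : Fin N → Fin M => B a1 = wb),
        (∏ j ∈ Finset.univ.filter (fun j => j ≠ a1), boltz lam qb (B j)) * Eb B)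
      + γ * ⨆ w', qb w')
    (qs : Fin M × Fin M → ℝ)
    (hqs : ∀ w : Fin M × Fin M, qs w = qa w.1 + qb w.2 + rd / (1 - γ)) :
    ∀ w : Fin M × Fin M, qs w =
      (∑ C ∈ Finset.univ.filter (fun C : Fin N → Fin M × Fin M => C a1 = w),
        (∏ j ∈ Finset.univ.filter (fun j => j ≠ a1), boltz lam qs (C j)) * E1 C)
      + γ * ⨆ w', qs w' := by
  have : Nonempty (Fin M) := ⟨⟨0, hM⟩⟩
  intro w
  have h1γ : 1 - γ ≠ 0 := by linarith
  have hWa := sum_weight a1 (boltz lam qa) (boltz_sum lam qa) w.1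
  have hWb := sum_weight a1 (boltz lam qb) (boltz_sum lam qb) w.2
  have hmean : ∑ C ∈ Finset.univ.filter (fun C : Fin N → Fin M × Fin M => C a1 = w),
        (∏ j ∈ Finset.univ.filter (fun j => j ≠ a1), boltz lam qs (C j)) * E1 C
      = (∑ A ∈ Finset.univ.filter (fun A : Fin N → Fin M => A a1 = w.1),
          (∏ j ∈ Finset.univ.filter (fun j => j ≠ a1), boltz lam qa (A j)) * Ea A)
        + (∑ B ∈ Finset.univ.filter (fun B : Fin N → Fin M => B a1 = w.2),
          (∏ j ∈ Finset.univ.filter (fun j => j ≠ a1), boltz lam qb (B j)) * Eb B)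
        + rd := by
    simp only [boltz_add lam qa qb _ qs hqs, Finset.prod_mul_distrib, hE1]
    rw [sum_profiles a1 w (fun A B =>
      ((∏ j ∈ Finset.univ.filter (fun j => j ≠ a1), boltz lam qa (A j)) *
        ∏ j ∈ Finset.univ.filter (fun j => j ≠ a1), boltz lam qb (B j)) * (Ea A + Eb B + rd))]
    -- Summing over the bid profiles first uses that the bid weights have mass one.
    have hinner : ∀ x y : ℝ,
        ∑ B ∈ Finset.univ.filter (fun B : Fin N → Fin M => B a1 = w.2),
          (x * ∏ j ∈ Finset.univ.filter (fun j => j ≠ a1), boltz lam qb (B j)) * (y + Eb B + rd)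
        = x * y + x * ((∑ B ∈ Finset.univ.filter (fun B : Fin N → Fin M => B a1 = w.2),
          (∏ j ∈ Finset.univ.filter (fun j => j ≠ a1), boltz lam qb (B j)) * Eb B) + rd) := by
      intro x y
      rw [← mul_add, ← add_assoc, add_right_comm, ← mul_one (y + rd), ← hWb, Finset.mul_sum,
        ← Finset.sum_add_distrib, Finset.mul_sum]
      exact Finset.sum_congr rfl fun B _ => by ring
    simp only [hinner]
    rw [Finset.sum_add_distrib, ← Finset.sum_mul, hWa]
    ring
  rw [hmean, iSup_separable qa qb _ qs hqs, hqs]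
  have hrd : rd / (1 - γ) = rd + γ * (rd / (1 - γ)) := by
    field_simp
    ring
  linarith [hqa w.1, hqb w.2]
end

section
/- Let M ≥ 1 and let f : (Fin M → ℝ) → ℝ be continuous. For N ≥ 1 and x in the standard simplex Δ = { x : Fin M → ℝ | ∀ i, 0 ≤ x i, and ∑_i x i = 1 }, define the multivariate Bernstein polynomial B_N f (x) = ∑_{v : Fin M → ℕ with ∑_i v i = N} ( N! / ∏_i (v i)! ) · ( ∏_i (x i)^{v i} ) · f( fun i => (v i : ℝ) / N ). Then B_N f converges to f uniformly on Δ: sup_{x ∈ Δ} | B_N f (x) − f(x) | → 0 as N → ∞. -/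
open Filter

/-!
Bernstein's argument. For `x` in the simplex the weights
`w v = N! / ∏ (v i)! * ∏ x i ^ v i` form the multinomial distribution. Multiplying the `i`-th
coordinate by an indeterminate `X` in the multinomial theorem gives the generating function
`∑ w v X ^ v i = (1 - x i + x i X) ^ N` (`genFun`); two differentiations at `X = 1` give the first
two moments, hence `∑ w v (v i / N - x i) ^ 2 = x i (1 - x i) / N ≤ 1 / N`
(`bernstein_variance_le`).

On the compact simplex `f` is bounded by some `K` and uniformly continuous, so
`|f y - f x| ≤ ε + 2 K / δ ^ 2 * ∑ (y i - x i) ^ 2` for all `x, y` in the simplex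
(`exists_quadratic_modulus`). Averaging over `y = v / N` yields
`|B_N f x - f x| ≤ ε + C M / N` uniformly in `x`.
-/

/-- The multinomial weight `N! / ∏ (v i)! * ∏ x i ^ v i`. -/
noncomputable def bernsteinWeight {M : ℕ} (N : ℕ) (x : Fin M → ℝ) (v : Fin M → ℕ) : ℝ :=
  ((N.factorial : ℝ) / ∏ i, ((v i).factorial : ℝ)) * (∏ i, x i ^ v i)

lemma bernsteinWeight_nonneg {M : ℕ} (N : ℕ) {x : Fin M → ℝ} (hx : ∀ i, 0 ≤ x i)
    (v : Fin M → ℕ) : 0 ≤ bernsteinWeight N x v :=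
  mul_nonneg (by positivity) (Finset.prod_nonneg fun i _ => pow_nonneg (hx i) _)

lemma bernsteinWeight_eq {M N : ℕ} (x : Fin M → ℝ) {v : Fin M → ℕ}
    (hv : v ∈ Finset.Nat.antidiagonalTuple M N) :
    bernsteinWeight N x v = (Nat.multinomial Finset.univ v : ℝ) * ∏ i, x i ^ v i := by
  rw [Finset.Nat.mem_antidiagonalTuple] at hv
  have h := Nat.multinomial_spec Finset.univ v
  rw [hv] at h
  have h0 : (∏ i, ((v i).factorial : ℝ)) ≠ 0 :=
    Finset.prod_ne_zero_iff.2 fun i _ => by positivity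
  unfold bernsteinWeight
  congr 1
  rw [div_eq_iff h0, ← h]
  push_cast
  ring

open Polynomial in
/-- The generating function of the `i`-th coordinate under the multinomial distribution. -/
lemma genFun {M : ℕ} (N : ℕ) {x : Fin M → ℝ} (hx : ∑ j, x j = 1) (i : Fin M) :
    ∑ v ∈ Finset.Nat.antidiagonalTuple M N, C (bernsteinWeight N x v) * X ^ v i =
      (C (1 - x i) + C (x i) * X) ^ N := by
  have h := Finset.sum_pow_eq_sum_piAntidiag (Finset.univ : Finset (Fin M))
    (fun j => C (x j) * (if j = i then X else 1) : Fin M → ℝ[X]) N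
  have hs : (∑ j, C (x j) * (if j = i then X else 1) : ℝ[X]) = C (1 - x i) + C (x i) * X := by
    have h1 : ∀ j, (C (x j) * (if j = i then X else 1) : ℝ[X]) =
        C (x j) + (if j = i then C (x j) * (X - 1) else 0) := by
      intro j; split_ifs <;> ring
    simp_rw [h1]
    rw [Finset.sum_add_distrib, ← map_sum, hx]
    simp
    ring
  rw [hs, Finset.piAntidiag_univ_fin_eq_antidiagonalTuple] at h
  rw [h]
  refine Finset.sum_congr rfl fun v hv => ?_
  rw [bernsteinWeight_eq x hv]
  simp only [mul_pow, Finset.prod_mul_distrib, ite_pow, one_pow]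
  simp [map_prod, mul_assoc]

lemma sum_bernsteinWeight {M : ℕ} (N : ℕ) {x : Fin M → ℝ} (hx : ∑ j, x j = 1) (i : Fin M) :
    ∑ v ∈ Finset.Nat.antidiagonalTuple M N, bernsteinWeight N x v = 1 := by
  simpa [Polynomial.eval_finsetSum] using congrArg (Polynomial.eval 1) (genFun N hx i)

lemma bernstein_first_moment {M : ℕ} (N : ℕ) {x : Fin M → ℝ} (hx : ∑ j, x j = 1) (i : Fin M) :
    ∑ v ∈ Finset.Nat.antidiagonalTuple M N, bernsteinWeight N x v * v i = N * x i := by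
  simpa [Polynomial.eval_finsetSum, Polynomial.derivative_pow] using
    congrArg (fun p => Polynomial.eval 1 (Polynomial.derivative p)) (genFun N hx i)

lemma bernstein_second_moment {M : ℕ} (N : ℕ) {x : Fin M → ℝ} (hx : ∑ j, x j = 1) (i : Fin M) :
    ∑ v ∈ Finset.Nat.antidiagonalTuple M N, bernsteinWeight N x v * (v i * (v i - 1)) =
      N * (N - 1) * x i ^ 2 := by
  have key : ∀ n : ℕ, (n : ℝ) * ((n - 1 : ℕ) : ℝ) = n * (n - 1) := by
    rintro (_ | n) <;> simp
  have h := congrArg (fun p => Polynomial.eval 1 (Polynomial.derivative (Polynomial.derivative p)))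
    (genFun N hx i)
  simp [Polynomial.eval_finsetSum, Polynomial.derivative_pow, key] at h
  rw [h, ← key]
  ring

lemma bernstein_variance_le {M N : ℕ} (hN : 0 < N) {x : Fin M → ℝ} (hx : ∑ j, x j = 1)
    (i : Fin M) :
    ∑ v ∈ Finset.Nat.antidiagonalTuple M N, bernsteinWeight N x v * ((v i : ℝ) / N - x i) ^ 2
      ≤ 1 / N := by
  have hN' : (0 : ℝ) < N := by exact_mod_cast hN
  have h0 := sum_bernsteinWeight N hx i
  have h1 := bernstein_first_moment N hx i
  have h2 := bernstein_second_moment N hx i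
  have e : ∀ v : Fin M → ℕ, bernsteinWeight N x v * ((v i : ℝ) / N - x i) ^ 2 =
      (1 / N ^ 2) * (bernsteinWeight N x v * (v i * (v i - 1)))
      + (1 / N ^ 2 - 2 * x i / N) * (bernsteinWeight N x v * v i)
      + x i ^ 2 * bernsteinWeight N x v := by
    intro v; field_simp; ring
  simp_rw [e]
  rw [Finset.sum_add_distrib, Finset.sum_add_distrib, ← Finset.mul_sum, ← Finset.mul_sum,
    ← Finset.mul_sum, h0, h1, h2]
  have : 1 / (N : ℝ) ^ 2 * (N * (N - 1) * x i ^ 2) + (1 / N ^ 2 - 2 * x i / N) * (N * x i)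
      + x i ^ 2 * 1 = (x i * (1 - x i)) / N := by
    field_simp; ring
  rw [this]
  gcongr
  nlinarith [sq_nonneg (x i - 1 / 2)]

/-- Uniform continuity and boundedness on the simplex, packaged as one quadratic estimate. -/
lemma exists_quadratic_modulus {M : ℕ} {f : (Fin M → ℝ) → ℝ} (hf : Continuous f) {ε : ℝ}
    (hε : 0 < ε) : ∃ C : ℝ, 0 ≤ C ∧ ∀ x ∈ stdSimplex ℝ (Fin M), ∀ y ∈ stdSimplex ℝ (Fin M),
      |f y - f x| ≤ ε + C * ∑ i, (y i - x i) ^ 2 := by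
  have hc : IsCompact (stdSimplex ℝ (Fin M)) := isCompact_stdSimplex ℝ (Fin M)
  obtain ⟨K, hK⟩ := hc.exists_bound_of_continuousOn hf.continuousOn
  have hu := hc.uniformContinuousOn_of_continuous hf.continuousOn
  obtain ⟨δ, hδ, hu⟩ := Metric.uniformContinuousOn_iff.1 hu ε hε
  refine ⟨2 * |K| / δ ^ 2, by positivity, fun x hx y hy => ?_⟩
  have hS : 0 ≤ ∑ i, (y i - x i) ^ 2 := Finset.sum_nonneg fun i _ => sq_nonneg _
  by_cases hd : dist y x < δ
  · have := hu y hy x hx hd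
    rw [Real.dist_eq] at this
    have : 0 ≤ 2 * |K| / δ ^ 2 * ∑ i, (y i - x i) ^ 2 := by positivity
    linarith
  -- In the sup metric some coordinate differs by at least `δ`, so the quadratic term is `≥ 2 |K|`.
  · have hi : ∃ i, δ ≤ |y i - x i| := by
      by_contra! h
      exact hd ((dist_pi_lt_iff hδ).2 fun i => by simpa [Real.dist_eq] using h i)
    obtain ⟨i, hi⟩ := hi
    have h1 : δ ^ 2 ≤ ∑ i, (y i - x i) ^ 2 :=
      calc δ ^ 2 ≤ |y i - x i| ^ 2 := by gcongr
        _ = (y i - x i) ^ 2 := sq_abs _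
        _ ≤ _ := Finset.single_le_sum (f := fun i => (y i - x i) ^ 2)
          (fun j _ => sq_nonneg _) (Finset.mem_univ i)
    have h2 : 2 * |K| ≤ 2 * |K| / δ ^ 2 * ∑ i, (y i - x i) ^ 2 :=
      calc 2 * |K| = 2 * |K| / δ ^ 2 * δ ^ 2 := by field_simp
        _ ≤ _ := by gcongr
    have h3 : |f y - f x| ≤ |f y| + |f x| := abs_sub _ _
    have h4 := hK x hx
    have h5 := hK y hy
    rw [Real.norm_eq_abs] at h4 h5
    linarith [le_abs_self K]

/-- uniform convergence of multivariate Bernstein polynomials on the standard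
simplex: for a continuous `f`, with
`B_N f(x) = ∑_{v, ∑ v = N} (N!/∏ (v i)!) (∏ x_i^{v i}) f(v/N)`,
`sup_{x ∈ Δ} |B_N f(x) − f(x)| → 0` as `N → ∞`. -/
theorem stmt_13 (M : ℕ) (hM : 1 ≤ M) (f : (Fin M → ℝ) → ℝ) (hf : Continuous f)
    (B : ℕ → (Fin M → ℝ) → ℝ)
    (hB : ∀ (N : ℕ) (x : Fin M → ℝ), B N x =
      ∑ v ∈ Finset.Nat.antidiagonalTuple M N,
        ((N.factorial : ℝ) / ∏ i, ((v i).factorial : ℝ)) * (∏ i, x i ^ v i) *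
          f (fun i => (v i : ℝ) / N)) :
    Tendsto (fun N => ⨆ x : stdSimplex ℝ (Fin M), |B N (x : Fin M → ℝ) - f (x : Fin M → ℝ)|)
      atTop (nhds 0) := by
  have bound : ∀ ε > 0, ∃ C : ℝ, 0 ≤ C ∧ ∀ N > 0, ∀ x ∈ stdSimplex ℝ (Fin M),
      |B N x - f x| ≤ ε + C * (M / N) := by
    intro ε hε
    obtain ⟨C, hC, h⟩ := exists_quadratic_modulus hf hε
    refine ⟨C, hC, fun N hN x hx => ?_⟩
    have hN' : (0 : ℝ) < N := by exact_mod_cast hN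
    have h1 := sum_bernsteinWeight N hx.2 ⟨0, hM⟩
    have e : B N x - f x = ∑ v ∈ Finset.Nat.antidiagonalTuple M N,
        bernsteinWeight N x v * (f (fun i => (v i : ℝ) / N) - f x) := by
      simp_rw [mul_sub]
      rw [Finset.sum_sub_distrib, ← Finset.sum_mul, h1, one_mul, hB]
      rfl
    calc |B N x - f x|
        ≤ ∑ v ∈ Finset.Nat.antidiagonalTuple M N,
          |bernsteinWeight N x v * (f (fun i => (v i : ℝ) / N) - f x)| := by
          rw [e]; exact Finset.abs_sum_le_sum_abs _ _
      _ ≤ ∑ v ∈ Finset.Nat.antidiagonalTuple M N,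
          bernsteinWeight N x v * (ε + C * ∑ i, ((v i : ℝ) / N - x i) ^ 2) := by
          refine Finset.sum_le_sum fun v hv => ?_
          have hw := bernsteinWeight_nonneg N hx.1 v
          rw [abs_mul, abs_of_nonneg hw]
          refine mul_le_mul_of_nonneg_left (h x hx (fun i => (v i : ℝ) / N) ⟨?_, ?_⟩) hw
          · intro i; positivity
          · rw [← Finset.sum_div, ← Nat.cast_sum, Finset.Nat.mem_antidiagonalTuple.1 hv]
            exact div_self hN'.ne'
      _ = ε + C * ∑ i, ∑ v ∈ Finset.Nat.antidiagonalTuple M N,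
          bernsteinWeight N x v * ((v i : ℝ) / N - x i) ^ 2 := by
          rw [Finset.sum_comm]
          simp_rw [← Finset.mul_sum, mul_add]
          rw [Finset.sum_add_distrib, ← Finset.sum_mul, h1, one_mul, Finset.mul_sum]
          congr 1
          exact Finset.sum_congr rfl fun v _ => by ring
      _ ≤ ε + C * ∑ i : Fin M, 1 / (N : ℝ) := by
          gcongr with i
          exact bernstein_variance_le hN hx.2 i
      _ = ε + C * (M / N) := by simp [div_eq_mul_inv]
  rw [Metric.tendsto_atTop']
  intro ε hε
  obtain ⟨C, hC, h⟩ := bound (ε / 2) (by positivity)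
  have hlim : Tendsto (fun N : ℕ => ε / 2 + C * ((M : ℝ) / N)) atTop (nhds (ε / 2 + C * 0)) :=
    ((tendsto_const_div_atTop_nhds_zero_nat (M : ℝ)).const_mul C).const_add _
  obtain ⟨n, hn⟩ := eventually_atTop.1
    (hlim.eventually (gt_mem_nhds (show ε / 2 + C * 0 < ε by linarith)))
  refine ⟨n, fun N hN => ?_⟩
  have hle : (⨆ x : stdSimplex ℝ (Fin M), |B N (x : Fin M → ℝ) - f (x : Fin M → ℝ)|) ≤
      ε / 2 + C * ((M : ℝ) / N) :=
    Real.iSup_le (fun x => h N (by omega) x x.2) (by positivity)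
  rw [Real.dist_eq, sub_zero, abs_of_nonneg (Real.iSup_nonneg fun x => abs_nonneg _)]
  exact hle.trans_lt (hn N hN.le)
end

section
/- Let N ≥ 2 agents quote ask spreads indexed by Fin M (M ≥ 2) with spread values K : Fin M → ℝ that are positive, and let the market order arrival probability P : (Fin N → Fin M) → ℝ satisfy ε ≤ P(A) ≤ 1 for all profiles A, where 0 < ε < 1. Agent 1's expected ask-side reward at profile A is E_a(A) = K(A 1) · P(A) / #{ j : A j = min_j A j } if A 1 = min_j A j, and E_a(A) = 0 otherwise (the spread index ordering is increasing, so the minimum index is the best ask). For q : Fin M → ℝ and λ > 0 let R(w; q) = ∑_{A : A 1 = w} ( ∏_{j ≠ 1} L(q, A j) ) · E_a(A). Then for the highest spread index M: R(M; q) = L(q, M)^{N−1} · K(M) · P(A^M) / N, where A^M is the profile in which every agent chooses M; consequently ε · L(q, M)^{N−1} · K(M) / N ≤ R(M; q) ≤ L(q, M)^{N−1} · K(M) / N. -/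
/-!
Since `top` is the largest index, a profile in which agent `a1` quotes `top` and still attains
the minimum must be constantly `top`. Hence the sum defining `R top q` has a single nonzero term,
in which all `N` agents tie and each of the `N - 1` opponents contributes a factor `L q top`.
The bounds follow from `ε ≤ P ≤ 1` and nonnegativity of the remaining factor.
-/

open Finset

/-- in the dealer market with `N ≥ 2` agents, ask spreads indexed by `Fin M`
(in increasing order, so the minimum index is the best ask), positive spread values `K`,
arrival probabilities `ε ≤ P(A) ≤ 1`, agent 1's (here `a1`) ask-side expected reward
`Ea(A) = K(A a1) P(A)/#{j : A j = min_j A j}` if `A a1` attains the minimum and `0`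
otherwise, and `R(w; q) = ∑_{A : A a1 = w} (∏_{j ≠ a1} L q (A j)) Ea(A)`, the highest
spread index `M − 1` satisfies
`R(M−1; q) = L(q, M−1)^{N−1} K(M−1) P(A^{M−1}) / N` where `A^{M−1}` is the profile in which
every agent quotes the highest spread; consequently
`ε L^{N−1} K / N ≤ R ≤ L^{N−1} K / N`. -/
theorem stmt_14 (N M : ℕ) (hN : 2 ≤ N) (hM : 2 ≤ M) (a1 : Fin N)
    (lam ε : ℝ) (hlam : 0 < lam) (hε0 : 0 < ε) (hε1 : ε < 1)
    (K : Fin M → ℝ) (hKpos : ∀ m, 0 < K m)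
    (P : (Fin N → Fin M) → ℝ) (hP : ∀ A, ε ≤ P A ∧ P A ≤ 1)
    (L : (Fin M → ℝ) → Fin M → ℝ)
    (hL : ∀ q c, L q c = Real.exp (q c / lam) / ∑ c', Real.exp (q c' / lam))
    (Ea : (Fin N → Fin M) → ℝ)
    (hEa : ∀ A : Fin N → Fin M, Ea A =
      if A a1 = Finset.univ.inf' ⟨a1, Finset.mem_univ a1⟩ A
      then K (A a1) * P A /
        ((Finset.univ.filter
          (fun j => A j = Finset.univ.inf' ⟨a1, Finset.mem_univ a1⟩ A)).card : ℝ)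
      else 0)
    (R : Fin M → (Fin M → ℝ) → ℝ)
    (hR : ∀ w q, R w q =
      ∑ A ∈ Finset.univ.filter (fun A : Fin N → Fin M => A a1 = w),
        (∏ j ∈ Finset.univ.filter (fun j => j ≠ a1), L q (A j)) * Ea A)
    (q : Fin M → ℝ) (top : Fin M) (htop : top = ⟨M - 1, by omega⟩) :
    R top q = L q top ^ (N - 1) * K top * P (fun _ => top) / N
    ∧ ε * (L q top ^ (N - 1) * K top / N) ≤ R top q
    ∧ R top q ≤ L q top ^ (N - 1) * K top / N := by
  have hle : ∀ c : Fin M, c ≤ top := fun c => by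
    subst htop
    exact Fin.mk_le_mk.mpr (by omega)
  have hLpos : 0 < L q top := by
    rw [hL]
    exact div_pos (Real.exp_pos _)
      (Finset.sum_pos (fun _ _ => Real.exp_pos _) ⟨top, Finset.mem_univ _⟩)
  have hNpos : (0 : ℝ) < N := by
    exact_mod_cast (by omega : 0 < N)
  have hmin : Finset.univ.inf' ⟨a1, Finset.mem_univ a1⟩ (fun _ : Fin N => top) = top :=
    Finset.inf'_const _ _
  have hEtop : Ea (fun _ => top) = K top * P (fun _ => top) / N := by
    rw [hEa, hmin]
    simp
  have hmain : R top q = L q top ^ (N - 1) * K top * P (fun _ => top) / N := by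
    rw [hR, Finset.sum_eq_single (fun _ : Fin N => top)]
    · rw [hEtop, Finset.prod_const, Finset.filter_ne' Finset.univ a1,
        Finset.card_erase_of_mem (Finset.mem_univ a1), Finset.card_univ, Fintype.card_fin]
      ring
    · intro A hA hne
      have hA1 : A a1 = top := (Finset.mem_filter.mp hA).2
      rw [hEa, if_neg, mul_zero]
      -- If `top` were the minimum of `A`, every quote would be squeezed to `top`.
      intro h
      refine hne (funext fun j => le_antisymm (hle _) ?_)
      rw [← hA1, h]
      exact Finset.inf'_le A (Finset.mem_univ j)
    · intro h
      simp at h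
  have hC : 0 ≤ L q top ^ (N - 1) * K top / N :=
    div_nonneg (mul_nonneg (pow_nonneg hLpos.le _) (hKpos top).le) hNpos.le
  have hfac : R top q = P (fun _ => top) * (L q top ^ (N - 1) * K top / N) := by
    rw [hmain]
    ring
  refine ⟨hmain, ?_, ?_⟩
  · rw [hfac]
    exact mul_le_mul_of_nonneg_right (hP _).1 hC
  · rw [hfac]
    exact mul_le_of_le_one_left hC (hP _).2
end

section
/- Let N ≥ 2, K ≥ 1, λ > 0, γ ∈ [0,1), and let E_1 : (Fin N → Fin K) → ℝ be any (bounded) payoff function for agent 1. Then there exists q* : Fin K → ℝ satisfying the symmetric fixed-point equation: for all w, q*(w) = ∑_{C : Fin N → Fin K with C 1 = w} ( ∏_{j ≠ 1} L(q*, C j) ) · E_1(C) + γ · max_{w'} q*(w'). -/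
/-!
The Boltzmann probabilities do not change when a constant is added to all Q-values. Hence it is
enough to solve the equation without the discounted maximum, `q = T q`: if `q` solves it, then
`q + s` with `s = γ (max q) / (1 - γ)` solves the full equation. The map `T` is smooth and, since
the Boltzmann probabilities lie in `[0, 1]`, bounded, so a fixed point exists by Brouwer's theorem.

Brouwer's theorem is proved here for bounded `C¹` maps of Euclidean space
(`exists_fixedPoint_of_bounded`), by reduction to the absence of a `C¹` retraction of the ball onto
the sphere (`no_retraction`). The latter follows the Milnor–Rogers volume argument. For a retraction
`r`, set `g = r - id`. For small `t ≥ 0` the map `x + t g(x)` is a bijection of the closed ball onto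
itself (`bijOn_closedBall`), so its Jacobian integrates to the volume of the ball. This integral is
a polynomial in `t` (`exists_polynomial_det`), hence it equals the volume at `t = 1` too, whereas
the Jacobian of `r` is identically zero because `r` takes values in the sphere.
-/

open MeasureTheory Metric

/-- `det (1 + t A)` is a polynomial in `t` of degree at most the dimension. -/
lemma exists_polynomial_det {n : ℕ}
    (A : EuclideanSpace ℝ (Fin n) →L[ℝ] EuclideanSpace ℝ (Fin n)) :
    ∃ P : Polynomial ℝ, P.degree < ((n + 1 : ℕ) : WithBot ℕ) ∧
      ∀ t : ℝ, P.eval t = (ContinuousLinearMap.id ℝ _ + t • A).det := by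
  let b := (EuclideanSpace.basisFun (Fin n) ℝ).toBasis
  let M := LinearMap.toMatrix b b (A : EuclideanSpace ℝ (Fin n) →ₗ[ℝ] EuclideanSpace ℝ (Fin n))
  refine ⟨((Polynomial.X : Polynomial ℝ) • M.map Polynomial.C +
    (1 : Matrix (Fin n) (Fin n) ℝ).map Polynomial.C).det, ?_, fun t => ?_⟩
  · refine lt_of_le_of_lt (Polynomial.degree_le_of_natDegree_le
      (Polynomial.natDegree_det_X_add_C_le M 1)) ?_
    simp only [Fintype.card_fin]
    exact_mod_cast Nat.lt_succ_self n
  · rw [ContinuousLinearMap.det, ← LinearMap.det_toMatrix b, ← Polynomial.coe_evalRingHom,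
      RingHom.map_det]
    congr 1
    ext i j
    simp only [RingHom.mapMatrix_apply, Matrix.map_apply, Matrix.add_apply, Matrix.smul_apply,
      ContinuousLinearMap.toLinearMap_add, ContinuousLinearMap.toLinearMap_smul, ContinuousLinearMap.coe_id,
      map_add, map_smul, LinearMap.toMatrix_id, Polynomial.coe_evalRingHom,
      Polynomial.eval_C, smul_eq_mul, Polynomial.eval_mul, Polynomial.eval_X, M]
    ring

/-- Extending by zero a Lipschitz map of the closed unit ball that vanishes on the sphere keeps the
Lipschitz constant: a segment leaving the ball crosses the sphere. -/
lemma norm_extend_sub_le {n : ℕ}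
    {g : EuclideanSpace ℝ (Fin n) → EuclideanSpace ℝ (Fin n)} {C : ℝ} (hC : 0 ≤ C)
    (hg : ∀ x ∈ closedBall (0 : EuclideanSpace ℝ (Fin n)) 1,
      ∀ y ∈ closedBall (0 : EuclideanSpace ℝ (Fin n)) 1, ‖g x - g y‖ ≤ C * ‖x - y‖)
    (hg0 : ∀ x, ‖x‖ = 1 → g x = 0) (x y : EuclideanSpace ℝ (Fin n)) :
    ‖(closedBall 0 1).indicator g x - (closedBall 0 1).indicator g y‖ ≤ C * ‖x - y‖ := by
  have key : ∀ x y : EuclideanSpace ℝ (Fin n), ‖x‖ ≤ 1 → 1 < ‖y‖ → ‖g x‖ ≤ C * ‖x - y‖ := by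
    intro x y hx hy
    have hcont : ContinuousOn (fun s : ℝ => ‖x + s • (y - x)‖) (Set.Icc 0 1) := by fun_prop
    have h1 : (1 : ℝ) ∈ Set.Icc ‖x + (0 : ℝ) • (y - x)‖ ‖x + (1 : ℝ) • (y - x)‖ := by
      simp [hx, hy.le]
    obtain ⟨s, ⟨hs0, hs1⟩, hs⟩ := intermediate_value_Icc zero_le_one hcont h1
    have hs' : ‖x + s • (y - x)‖ = 1 := hs
    have h2 := hg x (by simpa using hx) (x + s • (y - x)) (by simp [hs'])
    rw [hg0 _ hs', sub_zero] at h2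
    refine h2.trans (mul_le_mul_of_nonneg_left ?_ hC)
    have : x - (x + s • (y - x)) = s • (x - y) := by module
    rw [this, norm_smul, Real.norm_of_nonneg hs0]
    exact mul_le_of_le_one_left (norm_nonneg _) hs1
  by_cases hx : ‖x‖ ≤ 1 <;> by_cases hy : ‖y‖ ≤ 1
  · rw [Set.indicator_of_mem (by simpa using hx), Set.indicator_of_mem (by simpa using hy)]
    exact hg x (by simpa using hx) y (by simpa using hy)
  · rw [Set.indicator_of_mem (by simpa using hx), Set.indicator_of_notMem (by simpa using hy),
      sub_zero]
    exact key x y hx (not_le.1 hy)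
  · rw [Set.indicator_of_notMem (by simpa using hx), Set.indicator_of_mem (by simpa using hy),
      zero_sub, norm_neg, norm_sub_rev]
    exact key y x hy (not_le.1 hx)
  · rw [Set.indicator_of_notMem (by simpa using hx), Set.indicator_of_notMem (by simpa using hy)]
    simp only [sub_zero, norm_zero]
    positivity

/-- The map `x ↦ x + t g(x)` permutes the closed unit ball when `t` is small: extended by the
identity outside the ball it is a contractive perturbation of the identity of the whole space. -/
lemma bijOn_closedBall {n : ℕ}
    {g : EuclideanSpace ℝ (Fin n) → EuclideanSpace ℝ (Fin n)} {C : ℝ} (hC : 0 ≤ C)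
    (hg : ∀ x ∈ closedBall (0 : EuclideanSpace ℝ (Fin n)) 1,
      ∀ y ∈ closedBall (0 : EuclideanSpace ℝ (Fin n)) 1, ‖g x - g y‖ ≤ C * ‖x - y‖)
    (hg0 : ∀ x, ‖x‖ = 1 → g x = 0) (hgr : ∀ x, ‖x + g x‖ = 1)
    {t : ℝ} (ht0 : 0 ≤ t) (ht1 : t ≤ 1) (htC : t * C < 1) :
    Set.BijOn (fun x => x + t • g x) (closedBall 0 1) (closedBall 0 1) := by
  refine ⟨fun x hx => ?_, fun x hx y hy hxy => ?_, fun y hy => ?_⟩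
  · have hx' : ‖x‖ ≤ 1 := by simpa using hx
    have h : x + t • g x = (1 - t) • x + t • (x + g x) := by module
    have : ‖x + t • g x‖ ≤ 1 := by
      rw [h]
      refine (norm_add_le _ _).trans ?_
      rw [norm_smul, norm_smul, hgr, Real.norm_of_nonneg ht0, Real.norm_of_nonneg (by linarith)]
      nlinarith
    simpa using this
  · have h1 : x - y = t • (g y - g x) := by
      have : x + t • g x = y + t • g y := hxy
      rw [smul_sub, sub_eq_sub_iff_add_eq_add, this, add_comm]
    have h2 : ‖x - y‖ ≤ t * C * ‖x - y‖ := by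
      calc ‖x - y‖ = t * ‖g y - g x‖ := by rw [h1, norm_smul, Real.norm_of_nonneg ht0]
        _ ≤ t * (C * ‖x - y‖) := by
          rw [norm_sub_rev x y]
          exact mul_le_mul_of_nonneg_left (hg y hy x hx) ht0
        _ = _ := by ring
    have h3 : ‖x - y‖ = 0 := by nlinarith [norm_nonneg (x - y)]
    exact sub_eq_zero.1 (norm_eq_zero.1 h3)
  · set G := (closedBall (0 : EuclideanSpace ℝ (Fin n)) 1).indicator g with hG
    have hcon : ContractingWith ⟨t * C, by positivity⟩ (fun z => y - t • G z) := by
      refine ⟨by exact_mod_cast htC, LipschitzWith.of_dist_le_mul fun a b => ?_⟩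
      rw [dist_eq_norm, dist_eq_norm]
      have : y - t • G a - (y - t • G b) = t • (G b - G a) := by module
      rw [this, norm_smul, Real.norm_of_nonneg ht0, norm_sub_rev a b]
      calc t * ‖G b - G a‖ ≤ t * (C * ‖b - a‖) :=
            mul_le_mul_of_nonneg_left (norm_extend_sub_le hC hg hg0 b a) ht0
        _ = t * C * ‖b - a‖ := by ring
    have hfix : y - t • G hcon.fixedPoint = hcon.fixedPoint := hcon.fixedPoint_isFixedPt
    set z := hcon.fixedPoint
    have hyz : z + t • G z = y := (eq_add_of_sub_eq hfix).symm
    have hz : z ∈ closedBall (0 : EuclideanSpace ℝ (Fin n)) 1 := by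
      by_contra hz
      rw [hG, Set.indicator_of_notMem hz, smul_zero, add_zero] at hyz
      exact hz (hyz ▸ hy)
    refine ⟨z, hz, ?_⟩
    rw [hG, Set.indicator_of_mem hz] at hyz
    exact hyz

/-- There is no `C¹` map into the unit sphere fixing the unit sphere pointwise. With `g = r - id`,
the integral over the ball of the Jacobian of `x + t g(x)` is a polynomial in `t` equal to the
volume of the ball for small `t ≥ 0`, but it vanishes at `t = 1`. -/
lemma no_retraction {n : ℕ} (r : EuclideanSpace ℝ (Fin n) → EuclideanSpace ℝ (Fin n))
    (hr : ContDiff ℝ 1 r) (hr1 : ∀ x, ‖r x‖ = 1) (hrid : ∀ x, ‖x‖ = 1 → r x = x) : False := by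
  set B : Set (EuclideanSpace ℝ (Fin n)) := closedBall 0 1 with hB
  have hBc : IsCompact B := isCompact_closedBall _ _
  set g : EuclideanSpace ℝ (Fin n) → EuclideanSpace ℝ (Fin n) := fun x => r x - x with hgdef
  have hg : ContDiff ℝ 1 g := hr.sub contDiff_id
  have hgd : Differentiable ℝ g := hg.differentiable one_ne_zero
  have hgc : Continuous (fderiv ℝ g) := hg.continuous_fderiv one_ne_zero
  have hg0 : ∀ x, ‖x‖ = 1 → g x = 0 := fun x hx => by simp [hgdef, hrid x hx]
  have hgr : ∀ x, ‖x + g x‖ = 1 := fun x => by simp [hgdef, hr1]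
  obtain ⟨C, hCb⟩ := hBc.exists_bound_of_continuousOn hgc.continuousOn
  have hC : 0 ≤ C := (norm_nonneg _).trans (hCb 0 (by simp [hB]))
  have hlip : ∀ x ∈ B, ∀ y ∈ B, ‖g x - g y‖ ≤ C * ‖x - y‖ := fun x hx y hy =>
    (convex_closedBall _ _).norm_image_sub_le_of_norm_fderiv_le (fun z _ => hgd z) hCb hy hx
  set J : ℝ → EuclideanSpace ℝ (Fin n) → ℝ :=
    fun t x => (ContinuousLinearMap.id ℝ _ + t • fderiv ℝ g x).det with hJ
  have hJc : ∀ t, Continuous (J t) := fun t =>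
    ContinuousLinearMap.continuous_det.comp (continuous_const.add (hgc.const_smul t))
  have hJi : ∀ t, IntegrableOn (J t) B := fun t => (hJc t).continuousOn.integrableOn_compact hBc
  obtain ⟨δ, hδ, hδdet⟩ : ∃ δ > 0, ∀ A : EuclideanSpace ℝ (Fin n) →L[ℝ] EuclideanSpace ℝ (Fin n),
      ‖A‖ < δ → 0 < (ContinuousLinearMap.id ℝ _ + A).det := by
    have hc : Continuous (fun A : EuclideanSpace ℝ (Fin n) →L[ℝ] EuclideanSpace ℝ (Fin n) =>
        (ContinuousLinearMap.id ℝ _ + A).det) :=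
      ContinuousLinearMap.continuous_det.comp (continuous_const.add continuous_id)
    have h0 : 0 < (ContinuousLinearMap.id ℝ (EuclideanSpace ℝ (Fin n)) + 0).det := by
      rw [add_zero, ContinuousLinearMap.det, ContinuousLinearMap.coe_id, LinearMap.det_id]
      exact one_pos
    obtain ⟨δ, hδ, h⟩ := Metric.eventually_nhds_iff.1 (hc.continuousAt.eventually_const_lt h0)
    exact ⟨δ, hδ, fun A hA => h (by simpa [dist_eq_norm] using hA)⟩
  have hsmall : ∀ t, 0 ≤ t → t ≤ 1 → t * C < 1 → t * C < δ →
      ∫ x in B, J t x = volume.real B := by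
    intro t ht0 ht1 htC htδ
    have hbij := bijOn_closedBall hC hlip hg0 hgr ht0 ht1 htC
    have hcv := integral_image_eq_integral_abs_det_fderiv_smul volume
      (s := B) (f := fun x => x + t • g x)
      (f' := fun x => ContinuousLinearMap.id ℝ _ + t • fderiv ℝ g x)
      measurableSet_closedBall
      (fun x _ => ((hasFDerivAt_id x).add
        ((hgd x).hasFDerivAt.const_smul t)).hasFDerivWithinAt) hbij.injOn (fun _ => (1 : ℝ))
    rw [hbij.image_eq] at hcv
    simp only [smul_eq_mul, mul_one, integral_const, MeasurableSet.univ,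
      measureReal_restrict_apply, Set.univ_inter] at hcv
    rw [hcv]
    refine setIntegral_congr_fun measurableSet_closedBall fun x hx => ?_
    refine (abs_of_pos (hδdet _ ?_)).symm
    rw [norm_smul, Real.norm_of_nonneg ht0]
    exact (mul_le_mul_of_nonneg_left (hCb x hx) ht0).trans_lt htδ
  -- The nodes `0, ε, …, nε` are all small enough for `hsmall`, and `n + 1` nodes determine a
  -- polynomial of degree at most `n`.
  set ε : ℝ := min 1 δ / ((C + 1) * (n + 1)) with hε
  have hm : 0 < min 1 δ := lt_min one_pos hδ
  have hεpos : 0 < ε := by positivity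
  let v : ℕ → ℝ := fun i => i * ε
  have hv : Set.InjOn v (Finset.range (n + 1)) := fun i _ j _ hij => by
    have : (i : ℝ) * ε = j * ε := hij
    exact_mod_cast mul_right_cancel₀ hεpos.ne' this
  have hvint : ∀ i ∈ Finset.range (n + 1), ∫ x in B, J (v i) x = volume.real B := by
    intro i hi
    have hin : (i : ℝ) < n + 1 := by exact_mod_cast Finset.mem_range.1 hi
    have h1 : v i * (C + 1) < min 1 δ := by
      have : v i * (C + 1) = i / (n + 1) * min 1 δ := by
        simp only [v, hε]; field_simp
      rw [this]
      exact mul_lt_of_lt_one_left hm ((div_lt_one (by positivity)).2 hin)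
    have h0 : 0 ≤ v i := by positivity
    have h2 := lt_min_iff.1 h1
    refine hsmall (v i) h0 ?_ ?_ ?_ <;> nlinarith
  have hJ1 : ∀ x, J 1 x = ∑ i ∈ Finset.range (n + 1),
      J (v i) x * (Lagrange.basis (Finset.range (n + 1)) v i).eval 1 := by
    intro x
    obtain ⟨P, hPd, hP⟩ := exists_polynomial_det (fderiv ℝ g x)
    have h := congrArg (Polynomial.eval 1) (Lagrange.eq_interpolate hv (f := P) (by simpa using hPd))
    rw [Lagrange.interpolate_apply, Polynomial.eval_finsetSum] at h
    simp only [Polynomial.eval_mul, Polynomial.eval_C, hP] at h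
    exact h
  have hint : ∫ x in B, J 1 x = volume.real B := by
    simp only [hJ1]
    rw [integral_finsetSum _ fun i _ => (hJi (v i)).mul_const _]
    simp only [integral_mul_const]
    rw [Finset.sum_congr rfl fun i hi => by rw [hvint i hi], ← Finset.mul_sum,
      ← Polynomial.eval_finsetSum, Lagrange.sum_basis hv ⟨0, by simp⟩, Polynomial.eval_one, mul_one]
  -- At `t = 1` the Jacobian is that of `r`; differentiating `‖r‖² = 1` shows that its range is
  -- orthogonal to `r x`, so it is singular.
  have hzero : ∀ x, J 1 x = 0 := by
    intro x
    by_contra hne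
    have hd : ContinuousLinearMap.id ℝ _ + (1 : ℝ) • fderiv ℝ g x = fderiv ℝ r x := by
      have hrd : DifferentiableAt ℝ r x := hr.differentiable one_ne_zero x
      have : fderiv ℝ g x = fderiv ℝ r x - ContinuousLinearMap.id ℝ _ :=
        (hrd.hasFDerivAt.sub (hasFDerivAt_id x)).fderiv
      rw [this, one_smul, add_sub_cancel]
    have horth : ∀ w, inner ℝ (r x) (fderiv ℝ r x w) = 0 := by
      intro w
      have hrd := (hr.differentiable one_ne_zero x).hasFDerivAt
      have h1 := (hrd.inner ℝ hrd).fderiv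
      have h2 : (fun y => inner ℝ (r y) (r y)) = fun _ => (1 : ℝ) := by
        funext y; rw [real_inner_self_eq_norm_sq, hr1]; norm_num
      rw [h2] at h1
      have h3 := congrArg (fun L => L w) h1
      simp [fderivInnerCLM_apply, real_inner_comm] at h3
      linarith
    have hdet : LinearMap.det (fderiv ℝ r x : EuclideanSpace ℝ (Fin n) →ₗ[ℝ] _) ≠ 0 := by
      rw [← hd]; exact hne
    obtain ⟨w, hw⟩ := (LinearMap.equivOfDetNeZero _ hdet).surjective (r x)
    have hw' : fderiv ℝ r x w = r x := hw
    have := horth w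
    rw [hw', real_inner_self_eq_norm_sq, hr1] at this
    norm_num at this
  simp only [hzero, integral_zero] at hint
  have hpos : 0 < volume.real B :=
    ENNReal.toReal_pos (measure_closedBall_pos _ _ one_pos).ne' hBc.measure_lt_top.ne
  exact hpos.ne hint

/-- Brouwer's theorem for a bounded `C¹` self-map of Euclidean space. Without a fixed point, cutting
`F` off outside a large ball and normalizing `x - F x` would give a retraction onto the sphere. -/
lemma exists_fixedPoint_of_bounded {n : ℕ}
    (F : EuclideanSpace ℝ (Fin n) → EuclideanSpace ℝ (Fin n))
    (hF : ContDiff ℝ 1 F) (M : ℝ) (hM : ∀ x, ‖F x‖ ≤ M) : ∃ x, F x = x := by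
  by_contra! hne
  have hM0 : 0 ≤ M := (norm_nonneg _).trans (hM 0)
  let χ : ContDiffBump (0 : EuclideanSpace ℝ (Fin n)) := ⟨M + 1, M + 2, by linarith, by linarith⟩
  let R : EuclideanSpace ℝ (Fin n) → EuclideanSpace ℝ (Fin n) := fun x => x - χ x • F x
  have hR : ContDiff ℝ 1 R := contDiff_id.sub (χ.contDiff.smul hF)
  have hR0 : ∀ x, R x ≠ 0 := by
    intro x hx
    have hx' : x = χ x • F x := sub_eq_zero.1 hx
    have hxM : ‖x‖ ≤ M := by
      rw [hx', norm_smul, Real.norm_of_nonneg χ.nonneg]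
      exact (mul_le_of_le_one_left (norm_nonneg _) χ.le_one).trans (hM x)
    have h1 : χ x = 1 := χ.one_of_mem_closedBall (by
      change x ∈ closedBall 0 (M + 1)
      rw [mem_closedBall_zero_iff]; linarith)
    rw [h1, one_smul] at hx'
    exact hne x hx'.symm
  let S : EuclideanSpace ℝ (Fin n) → EuclideanSpace ℝ (Fin n) := fun x => R ((M + 2) • x)
  have hS : ContDiff ℝ 1 S := hR.comp (contDiff_const_smul _)
  refine no_retraction (fun x => ‖S x‖⁻¹ • S x) ?_ ?_ ?_
  · exact ((hS.norm ℝ fun x => hR0 _).inv fun x => norm_ne_zero_iff.2 (hR0 _)).smul hS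
  · intro x
    rw [norm_smul, norm_inv, norm_norm, inv_mul_cancel₀ (norm_ne_zero_iff.2 (hR0 _))]
  · intro x hx
    have hn : ‖(M + 2) • x‖ = M + 2 := by
      rw [norm_smul, hx, Real.norm_of_nonneg (by linarith), mul_one]
    have hχ : χ ((M + 2) • x) = 0 := χ.zero_of_le_dist (by
      change M + 2 ≤ _
      rw [dist_zero_right, hn])
    have hSx : S x = (M + 2) • x := by simp [S, R, hχ]
    simp only [hSx, hn]
    rw [inv_smul_smul₀ (by linarith)]

/-- existence of a symmetric Boltzmann fixed point: for any payoff `E1` of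
agent 1 (here `a1`), there exists `q* : Fin K → ℝ` with
`q*(w) = ∑_{C : C a1 = w} (∏_{j ≠ a1} L q* (C j)) E1(C) + γ max_{w'} q*(w')` for all `w`. -/
theorem stmt_15 (N K : ℕ) (hN : 2 ≤ N) (hK : 1 ≤ K) (a1 : Fin N)
    (lam γ : ℝ) (hlam : 0 < lam) (hγ0 : 0 ≤ γ) (hγ1 : γ < 1)
    (E1 : (Fin N → Fin K) → ℝ)
    (L : (Fin K → ℝ) → Fin K → ℝ)
    (hL : ∀ q c, L q c = Real.exp (q c / lam) / ∑ c', Real.exp (q c' / lam)) :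
    ∃ qstar : Fin K → ℝ, ∀ w, qstar w =
      (∑ C ∈ Finset.univ.filter (fun C : Fin N → Fin K => C a1 = w),
        (∏ j ∈ Finset.univ.filter (fun j => j ≠ a1), L qstar (C j)) * E1 C)
      + γ * ⨆ w', qstar w' := by
  have : Nonempty (Fin K) := ⟨⟨0, hK⟩⟩
  have hsum : ∀ q : Fin K → ℝ, 0 < ∑ c', Real.exp (q c' / lam) := fun q =>
    Finset.sum_pos (fun c _ => Real.exp_pos _) Finset.univ_nonempty
  have hL0 : ∀ q c, 0 ≤ L q c := fun q c => by
    rw [hL]; exact div_nonneg (Real.exp_pos _).le (hsum q).le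
  have hL1 : ∀ q c, L q c ≤ 1 := fun q c => by
    rw [hL, div_le_one (hsum q)]
    exact Finset.single_le_sum (f := fun c' => Real.exp (q c' / lam))
      (fun c _ => (Real.exp_pos _).le) (Finset.mem_univ c)
  have hLshift : ∀ (q : Fin K → ℝ) (s : ℝ) c, L (fun w => q w + s) c = L q c := fun q s c => by
    rw [hL, hL]
    simp only [add_div, Real.exp_add, ← Finset.sum_mul]
    exact mul_div_mul_right _ _ (Real.exp_pos _).ne'
  let T : (Fin K → ℝ) → Fin K → ℝ := fun q w =>
    ∑ C ∈ Finset.univ.filter (fun C : Fin N → Fin K => C a1 = w),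
        (∏ j ∈ Finset.univ.filter (fun j => j ≠ a1), L q (C j)) * E1 C
  have hLsmooth : ∀ c, ContDiff ℝ 1 (fun x : EuclideanSpace ℝ (Fin K) => L x.ofLp c) := fun c => by
    simp only [hL]
    exact ContDiff.div (by fun_prop) (by fun_prop) fun x => (hsum _).ne'
  let F : EuclideanSpace ℝ (Fin K) → EuclideanSpace ℝ (Fin K) := fun x => WithLp.toLp 2 (T x.ofLp)
  have hF : ContDiff ℝ 1 F := by
    rw [contDiff_euclidean]
    intro w
    exact ContDiff.sum fun C _ => (contDiff_prod fun j _ => hLsmooth (C j)).mul contDiff_const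
  have hTb : ∀ q w, |T q w| ≤ ∑ C, |E1 C| := by
    intro q w
    refine (Finset.abs_sum_le_sum_abs _ _).trans ?_
    refine (Finset.sum_le_sum fun C _ => ?_).trans
      (Finset.sum_le_sum_of_subset_of_nonneg (Finset.filter_subset _ _) fun C _ _ => abs_nonneg _)
    rw [abs_mul]
    refine mul_le_of_le_one_left (abs_nonneg _) ?_
    rw [abs_of_nonneg (Finset.prod_nonneg fun j _ => hL0 _ _)]
    exact Finset.prod_le_one (fun j _ => hL0 _ _) fun j _ => hL1 _ _
  obtain ⟨x, hx⟩ := exists_fixedPoint_of_bounded F hF (√(∑ _w : Fin K, (∑ C, |E1 C|) ^ 2)) (by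
    intro x
    rw [EuclideanSpace.norm_eq]
    refine Real.sqrt_le_sqrt (Finset.sum_le_sum fun w _ => ?_)
    exact pow_le_pow_left₀ (norm_nonneg _) (hTb _ w) 2)
  set q : Fin K → ℝ := x.ofLp with hq
  have hTq : ∀ w, T q w = q w := fun w => congrArg (fun y : EuclideanSpace ℝ (Fin K) => y.ofLp w) hx
  -- `s` solves `s = γ * (max q + s)`
  let s : ℝ := γ * (⨆ w, q w) / (1 - γ)
  have hs : s = γ * ((⨆ w, q w) + s) := by
    have : 1 - γ ≠ 0 := by linarith
    simp only [s]; field_simp; ring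
  refine ⟨fun w => q w + s, fun w => ?_⟩
  have hsup : ⨆ w', (q w' + s) = (⨆ w', q w') + s :=
    (ciSup_add (Set.finite_range q).bddAbove s).symm
  simp only [hLshift]
  rw [hsup, ← hs]
  exact congrArg (· + s) (hTq w).symm
end
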